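/- arXiv:2601.09268 — 3 statements merged into one kernel-verified Lean document; each statement's English description precedes it below -/
import Mathlib

section
/- Let T be a commutative semiring, f ∈ T, and g : Fin n → T a finite family of elements. If the basic open set D(f) is contained in ⋃ᵢ D(g i) in the prime spectrum of T, then there exists N ≥ 1 such that f^N lies in the ideal generated by g 0, …, g (n−1), i.e., f^N ∈ Ideal.span (Set.range g) (so f^N is a finite sum of multiples of the gᵢ). -/
theorem exists_pow_mem_span_of_basicOpen_subset_iUnion
    {T : Type*} [CommSemiring T] (f : T) {n : ℕ} (g : Fin n → T)
    (h : (PrimeSpectrum.basicOpen f : Set (PrimeSpectrum T)) ⊆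
      ⋃ i : Fin n, (PrimeSpectrum.basicOpen (g i) : Set (PrimeSpectrum T))) :
    ∃ N : ℕ, 1 ≤ N ∧ f ^ N ∈ Ideal.span (Set.range g) := by
  -- The hypothesis says that `f` lies in every prime containing all the `g i`; the intersection of
  -- these primes is the radical of the span, also over a semiring.
  have hf : f ∈ (Ideal.span (Set.range g)).radical := by
    rw [Ideal.radical_eq_sInf, Submodule.mem_sInf]
    rintro P ⟨hgP, hP⟩
    by_contra hfP
    obtain ⟨i, hi⟩ := Set.mem_iUnion.mp (h (show (⟨P, hP⟩ : PrimeSpectrum T) ∈ _ from hfP))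
    exact hi (hgP (Ideal.subset_span ⟨i, rfl⟩))
  obtain ⟨N, hN⟩ := hf
  -- The exponent given by the radical may be `0`, so it is increased by one.
  exact ⟨N + 1, Nat.le_add_left 1 N, pow_succ' f N ▸ Ideal.mul_mem_left _ f hN⟩
end

section
/- Let T be a commutative semiring, f ∈ T, and g : Fin n → T with f ∈ (Ideal.span (Set.range g)).radical (equivalently, D(f) ⊆ ⋃ᵢ D(g i)). For each i the image of f in the localization Localization.Away (f * g i) is a unit, so the universal property of localization gives a canonical semiring homomorphism ρᵢ : Localization.Away f →+* Localization.Away (f * g i) commuting with the localization maps from T; similarly, for each pair i, j the images of f * g i and of f * g j in Localization.Away (f * g i * g j) are units, giving canonical homomorphisms ρᵢⱼ : Localization.Away (f * g i) →+* Localization.Away (f * g i * g j) and σᵢⱼ : Localization.Away (f * g j) →+* Localization.Away (f * g i * g j) commuting with the localization maps from T. If sections sᵢ ∈ Localization.Away (f * g i) satisfy the overlap compatibility ρᵢⱼ (s i) = σᵢⱼ (s j) for all i, j, then there exists s ∈ Localization.Away f with ρᵢ (s) = s i for every i. -/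
/-!
Write each `s i` as a fraction `a i / (f * g i) ^ N i`. Compatibility on the overlaps says that the
cross-multiplied numerators agree after multiplication by a power of `f * g i * g j`; as there are
finitely many pairs, one exponent `M` serves them all. Replacing the fractions by `b i / e i` with
`b i = a i * (f * g i) ^ M` and `e i = (f * g i) ^ (N i + M)` absorbs this factor, so that
`b i * e j = b j * e i` holds in `T` itself. Since `f` lies in the radical of the ideal generated by
the `e i`, some power is `f ^ K = ∑ i, c i * e i`, and the glued section is
`(∑ i, c i * b i) / f ^ K`. The argument uses no subtraction, hence works over semirings.
-/

/-- If `D(f)` is covered by the `D(g i)`, it is covered by the `D((f * g i) ^ m i)`, whatever the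
exponents. -/
theorem mem_radical_span_mul_pow {T ι : Type*} [CommSemiring T] (f : T) (g : ι → T)
    (hf : f ∈ (Ideal.span (Set.range g)).radical) (m : ι → ℕ) :
    f ∈ (Ideal.span (Set.range fun i => (f * g i) ^ m i)).radical := by
  set J := Ideal.span (Set.range fun i => (f * g i) ^ m i)
  obtain ⟨k, hk⟩ := hf
  have key : ∀ x ∈ Ideal.span (Set.range g), f * x ∈ J.radical := by
    intro x hx
    induction hx using Submodule.span_induction with
    | mem x hx =>
      obtain ⟨i, rfl⟩ := hx
      exact ⟨m i, Ideal.subset_span ⟨i, rfl⟩⟩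
    | zero => simp
    | add x y _ _ hx hy => rw [mul_add]; exact add_mem hx hy
    | smul a x _ hx =>
      rw [smul_eq_mul, mul_left_comm]; exact Ideal.mul_mem_left _ _ hx
  have h1 : f ^ (k + 1) ∈ J.radical := by
    rw [pow_succ']; exact key _ hk
  rw [← Ideal.radical_idem]
  exact ⟨k + 1, h1⟩

/-- Gluing (existence) for the structure presheaf on a standard cover:
given sections `s i` on the principal opens `D(f * g i)` agreeing on overlaps
`D(f * g i * g j)`, there is a section `s` on `D(f)` restricting to each `s i`.
The restriction maps `ρ i`, `ρij i j`, `σij i j` are the canonical homomorphisms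
given by the universal property of localization, characterized by commuting with
the localization maps from `T`. -/
theorem gluing_exists_on_standard_cover
    {T : Type*} [CommSemiring T] (f : T) {n : ℕ} (g : Fin n → T)
    (hf : f ∈ (Ideal.span (Set.range g)).radical)
    (ρ : ∀ i : Fin n, Localization.Away f →+* Localization.Away (f * g i))
    (hρ : ∀ i : Fin n,
      (ρ i).comp (algebraMap T (Localization.Away f)) =
        algebraMap T (Localization.Away (f * g i)))
    (ρij : ∀ i j : Fin n,
      Localization.Away (f * g i) →+* Localization.Away (f * g i * g j))
    (hρij : ∀ i j : Fin n,
      (ρij i j).comp (algebraMap T (Localization.Away (f * g i))) =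
        algebraMap T (Localization.Away (f * g i * g j)))
    (σij : ∀ i j : Fin n,
      Localization.Away (f * g j) →+* Localization.Away (f * g i * g j))
    (hσij : ∀ i j : Fin n,
      (σij i j).comp (algebraMap T (Localization.Away (f * g j))) =
        algebraMap T (Localization.Away (f * g i * g j)))
    (s : ∀ i : Fin n, Localization.Away (f * g i))
    (hcompat : ∀ i j : Fin n, ρij i j (s i) = σij i j (s j)) :
    ∃ σ : Localization.Away f, ∀ i : Fin n, ρ i σ = s i := by
  have hρ' (i : Fin n) (x : T) : ρ i (algebraMap T _ x) = algebraMap T _ x :=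
    RingHom.congr_fun (hρ i) x
  have hρij' (i j : Fin n) (x : T) : ρij i j (algebraMap T _ x) = algebraMap T _ x :=
    RingHom.congr_fun (hρij i j) x
  have hσij' (i j : Fin n) (x : T) : σij i j (algebraMap T _ x) = algebraMap T _ x :=
    RingHom.congr_fun (hσij i j) x
  choose N a ha using fun i => IsLocalization.Away.surj (f * g i) (s i)
  simp only [← map_pow] at ha
  have hcross (i j : Fin n) : ∃ M : ℕ, (f * g i * g j) ^ M * (a i * (f * g j) ^ N j) =
      (f * g i * g j) ^ M * (a j * (f * g i) ^ N i) := by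
    have h1 := congrArg (ρij i j) (ha i)
    have h2 := congrArg (σij i j) (ha j)
    simp only [map_mul (ρij i j), map_mul (σij i j), hρij', hσij'] at h1 h2
    have h3 : algebraMap T (Localization.Away (f * g i * g j)) (a i * (f * g j) ^ N j) =
        algebraMap T (Localization.Away (f * g i * g j)) (a j * (f * g i) ^ N i) := by
      rw [map_mul, map_mul, ← h1, ← h2, hcompat i j]
      exact mul_right_comm _ _ _
    obtain ⟨⟨_, M, rfl⟩, hM⟩ :=
      (IsLocalization.eq_iff_exists (Submonoid.powers (f * g i * g j)) _).1 h3
    exact ⟨M, hM⟩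
  choose M' hM' using hcross
  obtain ⟨M, hM⟩ : ∃ M, ∀ i j, M' i j ≤ M :=
    ⟨∑ i, ∑ j, M' i j, fun i j =>
      (Finset.single_le_sum (f := fun j => M' i j) (fun _ _ => Nat.zero_le _)
        (Finset.mem_univ j)).trans
      (Finset.single_le_sum (f := fun i => ∑ j, M' i j) (fun _ _ => Nat.zero_le _)
        (Finset.mem_univ i))⟩
  have hbe (i j : Fin n) : a i * (f * g i) ^ M * (f * g j) ^ (N j + M) =
      a j * (f * g j) ^ M * (f * g i) ^ (N i + M) := by
    obtain ⟨d, hd⟩ := Nat.exists_eq_add_of_le (hM i j)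
    -- `(f * g i) ^ M * (f * g j) ^ M` is a multiple of `(f * g i * g j) ^ M' i j`.
    have hfac : (f * g i) ^ M * (f * g j) ^ M =
        f ^ M * (f * g i * g j) ^ d * (f * g i * g j) ^ M' i j := by
      rw [hd]; ring
    calc a i * (f * g i) ^ M * (f * g j) ^ (N j + M)
        = ((f * g i) ^ M * (f * g j) ^ M) * (a i * (f * g j) ^ N j) := by ring
      _ = ((f * g i) ^ M * (f * g j) ^ M) * (a j * (f * g i) ^ N i) := by
          rw [hfac, mul_assoc, hM' i j, ← mul_assoc]
      _ = a j * (f * g j) ^ M * (f * g i) ^ (N i + M) := by ring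
  obtain ⟨K, hK⟩ := mem_radical_span_mul_pow f g hf fun i => N i + M
  obtain ⟨c, hc⟩ := Ideal.mem_span_range_iff_exists_fun.1 hK
  let σ : Localization.Away f := IsLocalization.mk' (M := Submonoid.powers f) _
    (∑ i, c i * (a i * (f * g i) ^ M)) ⟨f ^ K, K, rfl⟩
  have hσ : σ * algebraMap T _ (f ^ K) = algebraMap T _ (∑ i, c i * (a i * (f * g i) ^ M)) :=
    IsLocalization.mk'_spec _ _ _
  refine ⟨σ, fun j => ?_⟩
  have hunit : IsUnit (algebraMap T (Localization.Away (f * g j)) (f * g j)) :=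
    IsLocalization.Away.algebraMap_isUnit _
  have hunitf : IsUnit (algebraMap T (Localization.Away (f * g j)) f) := by
    rw [map_mul] at hunit
    exact isUnit_of_mul_isUnit_left hunit
  have hσj := congrArg (ρ j) hσ
  rw [map_mul, hρ', hρ'] at hσj
  have hT : (∑ i, c i * (a i * (f * g i) ^ M)) * (f * g j) ^ (N j + M) =
      a j * (f * g j) ^ M * f ^ K := by
    rw [← hc, Finset.sum_mul, Finset.mul_sum]
    refine Finset.sum_congr rfl fun i _ => ?_
    rw [mul_assoc, hbe i j, mul_left_comm]
  have hu : IsUnit (algebraMap T (Localization.Away (f * g j))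
      (f ^ K * (f * g j) ^ (N j + M))) := by
    rw [map_mul, map_pow, map_pow]
    exact (hunitf.pow K).mul (hunit.pow _)
  refine hu.mul_right_cancel ?_
  rw [map_mul, ← mul_assoc, hσj, ← map_mul, hT, map_mul, map_mul, ← ha j, pow_add, map_mul]
  ring
end

section
/- Let T be a commutative semiring, f ∈ T, and g : Fin n → T with f ∈ (Ideal.span (Set.range g)).radical (equivalently, D(f) ⊆ ⋃ᵢ D(g i)). Let ρᵢ : Localization.Away f →+* Localization.Away (f * g i) be the canonical homomorphism given by the universal property of localization (using that f maps to a unit in Localization.Away (f * g i)). If s, t ∈ Localization.Away f satisfy ρᵢ (s) = ρᵢ (t) for every i, then s = t. -/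
/-!
Over a common denominator, `s` and `t` are represented by elements `a`, `b` of `T`. The set
`equalizerIdeal a b` of all `c` with `c * a = c * b` is an ideal even without subtraction, and
`a`, `b` agree in `Localization.Away h` exactly when `h` lies in its radical. Agreement of the
restrictions puts every `f * g i` in that radical, hence also `f * x` for `x` in the span of
the `g i`. Some power `f ^ k` is such an `x`, so `f ^ (k + 1)` and therefore `f` lie in the
radical, i.e. `a` and `b` agree in `Localization.Away f`.
-/

/-- The ideal of all `c` with `c * a = c * b`; over a ring it is the annihilator of `a - b`. -/
def equalizerIdeal {T : Type*} [CommSemiring T] (a b : T) : Ideal T where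
  carrier := {c | c * a = c * b}
  add_mem' {x y} hx hy := by
    simp only [Set.mem_ofPred_eq] at *
    rw [add_mul, add_mul, hx, hy]
  zero_mem' := by simp
  smul_mem' c x hx := by
    simp only [Set.mem_ofPred_eq, smul_eq_mul] at *
    rw [mul_assoc, mul_assoc, hx]

lemma algebraMap_away_eq_iff_mem_radical {T : Type*} [CommSemiring T] (h a b : T) :
    algebraMap T (Localization.Away h) a = algebraMap T (Localization.Away h) b ↔
      h ∈ (equalizerIdeal a b).radical := by
  rw [IsLocalization.eq_iff_exists (Submonoid.powers h)]
  constructor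
  · rintro ⟨⟨_, m, rfl⟩, hm⟩
    exact ⟨m, hm⟩
  · rintro ⟨m, hm⟩
    exact ⟨⟨_, m, rfl⟩, hm⟩

/-- Uniqueness of gluing on a standard cover: a section of the structure presheaf on
`D(f)` is determined by its restrictions to the principal opens `D(f * g i)`.
The restriction maps `ρ i` are the canonical homomorphisms given by the universal
property of localization, characterized by commuting with the localization maps from `T`. -/
theorem gluing_unique_on_standard_cover
    {T : Type*} [CommSemiring T] (f : T) {n : ℕ} (g : Fin n → T)
    (hf : f ∈ (Ideal.span (Set.range g)).radical)
    (ρ : ∀ i : Fin n, Localization.Away f →+* Localization.Away (f * g i))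
    (hρ : ∀ i : Fin n,
      (ρ i).comp (algebraMap T (Localization.Away f)) =
        algebraMap T (Localization.Away (f * g i)))
    (s t : Localization.Away f)
    (h : ∀ i : Fin n, ρ i s = ρ i t) :
    s = t := by
  obtain ⟨⟨a', x⟩, hs⟩ := IsLocalization.surj (Submonoid.powers f) s
  obtain ⟨⟨b', y⟩, ht⟩ := IsLocalization.surj (Submonoid.powers f) t
  dsimp only at hs ht
  have hu := IsLocalization.map_units (Localization.Away f) (x * y)
  obtain ⟨a, ha⟩ : ∃ a, s * algebraMap T _ ((x * y : Submonoid.powers f) : T) =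
      algebraMap T (Localization.Away f) a :=
    ⟨a' * y, by rw [Submonoid.coe_mul, map_mul, map_mul, ← mul_assoc, hs]⟩
  obtain ⟨b, hb⟩ : ∃ b, t * algebraMap T _ ((x * y : Submonoid.powers f) : T) =
      algebraMap T (Localization.Away f) b :=
    ⟨b' * x, by rw [Submonoid.coe_mul, mul_comm (x : T), map_mul, map_mul, ← mul_assoc, ht]⟩
  have hg : ∀ i, f * g i ∈ (equalizerIdeal a b).radical := fun i ↦ by
    rw [← algebraMap_away_eq_iff_mem_radical, ← hρ i, RingHom.comp_apply, RingHom.comp_apply,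
      ← ha, ← hb, map_mul, map_mul, h i]
  have hspan : ∀ x ∈ Ideal.span (Set.range g), f * x ∈ (equalizerIdeal a b).radical := by
    intro x hx
    induction hx using Submodule.span_induction with
    | mem x hx =>
      obtain ⟨i, rfl⟩ := hx
      exact hg i
    | zero => simp
    | add x y _ _ hx hy =>
      rw [mul_add]
      exact add_mem hx hy
    | smul c x _ hx =>
      rw [smul_eq_mul, mul_left_comm]
      exact Ideal.mul_mem_left _ c hx
  obtain ⟨k, hk⟩ := hf
  have hrad : f ∈ (equalizerIdeal a b).radical := by
    have hpow := hspan _ hk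
    rw [← pow_succ'] at hpow
    rw [← Ideal.radical_idem]
    exact ⟨k + 1, hpow⟩
  apply hu.mul_right_cancel
  rw [ha, hb]
  exact (algebraMap_away_eq_iff_mem_radical f a b).2 hrad
end
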